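/- Suppose 𝑝̃ has exactly two maximizers m₁ < m₂ on [0,1], each satisfying m_ℓ = g(τ(m_ℓ)) and 𝑝̃''(m_ℓ) < 0, and fix ξ ∈ (m₁,m₂). Assume that ℙ(S_ℓ) converges to some p_ℓ > 0 as N → ∞, for ℓ = 1,2. Set W_ℓ = (M − N·m_ℓ)/N^{1/2}, where M = ∑σ_i and σ is drawn from the conditioned measure ℙ_ℓ. Then there exists a constant K such that E_ℓ[W_ℓ²] ≤ K for all N ≥ 1. -/

import Mathlib

open Real Finset MeasureTheory

noncomputable section

/-- Dimer configurations (matchings of the complete graph on `Fin N`), encoded as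
involutions of `Fin N`: fixed points are monomers, 2-cycles are dimers. -/
abbrev Dimer (N : ℕ) := {f : Fin N → Fin N // ∀ i, f (f i) = i}

/-- The set of monomers (dimer-free vertices) of a dimer configuration. -/
def monomers {N : ℕ} (D : Dimer N) : Finset (Fin N) :=
  Finset.univ.filter fun i => D.1 i = i

/-- Monomer density `m(D) = |𝓜(D)|/N`. -/
def mDim {N : ℕ} (D : Dimer N) : ℝ := ((monomers D).card : ℝ) / N

/-- The parameter `b = (log N)/2 + h - J`. -/
def bIMD (N : ℕ) (J h : ℝ) : ℝ := Real.log N / 2 + h - J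

/-- The Gibbs weight `exp(-H(D)) = exp(N (a m(D)^2 + b m(D)))` with `a = J`. -/
def wDim (N : ℕ) (J h : ℝ) (D : Dimer N) : ℝ :=
  Real.exp (N * (J * mDim D ^ 2 + bIMD N J h * mDim D))

/-- The probability of an event `A` under the IMD Gibbs measure. -/
def probDim (N : ℕ) (J h : ℝ) (A : Dimer N → Prop) : ℝ :=
  (∑ D : Dimer N, Set.indicator {D | A D} (wDim N J h) D) / ∑ D : Dimer N, wDim N J h D

/-- The conditional probability `ℙ(A | B)` under the IMD Gibbs measure. -/
def condProbDim (N : ℕ) (J h : ℝ) (A B : Dimer N → Prop) : ℝ :=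
  (∑ D : Dimer N, Set.indicator {D | A D ∧ B D} (wDim N J h) D) /
    ∑ D : Dimer N, Set.indicator {D | B D} (wDim N J h) D

/-- `g(x) = (√(e^{4x} + 4 e^{2x}) - e^{2x})/2`. -/
def gFun (x : ℝ) : ℝ := (Real.sqrt (Real.exp (4*x) + 4 * Real.exp (2*x)) - Real.exp (2*x)) / 2

/-- `τ(x) = (2x-1)J + h`. -/
def tauFun (J h x : ℝ) : ℝ := (2*x - 1) * J + h

/-- `𝑝̃(m) = -J m² - (1 - g(τ(m)) + log(1 - g(τ(m))))/2`. -/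
def ptilde (J h m : ℝ) : ℝ :=
  -J * m^2 - (1 - gFun (tauFun J h m) + Real.log (1 - gFun (tauFun J h m))) / 2

/-- The CDF of a centered Gaussian with variance `v`, evaluated at `z`. -/
def gaussCDF (v : ℝ) (z : ℝ) : ℝ :=
  (ProbabilityTheory.gaussianReal 0 (Real.toNNReal v) (Set.Iic z)).toReal

/-- Spin configurations `Σ = {0,1}^N`. -/
abbrev Config (N : ℕ) := Fin N → Bool

/-- `𝓐(σ) = {i : σ_i = 1}`. -/
def ASet {N : ℕ} (σ : Config N) : Finset (Fin N) := Finset.univ.filter fun i => σ i = true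

/-- `M(σ) = ∑ σ_i`. -/
def Msum {N : ℕ} (σ : Config N) : ℕ := (ASet σ).card

/-- Magnetization `m(σ) = M(σ)/N`. -/
def mConf {N : ℕ} (σ : Config N) : ℝ := (Msum σ : ℝ) / N

/-- `D(σ)`: the number of dimer configurations `D` with `𝓜(D) = 𝓐(σ)`. -/
def Dcount (N : ℕ) (σ : Config N) : ℕ :=
  (Finset.univ.filter fun D : Dimer N => monomers D = ASet σ).card

/-- The weight `D(σ) exp(-H(σ))` of the weighted Curie–Weiss model. -/
def wConf (N : ℕ) (J h : ℝ) (σ : Config N) : ℝ :=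
  (Dcount N σ : ℝ) * Real.exp (N * (J * mConf σ ^ 2 + bIMD N J h * mConf σ))

/-- The probability of an event `A` under the weighted Curie–Weiss Gibbs measure. -/
def probConf (N : ℕ) (J h : ℝ) (A : Config N → Prop) : ℝ :=
  (∑ σ : Config N, Set.indicator {σ | A σ} (wConf N J h) σ) / ∑ σ : Config N, wConf N J h σ

/-- Expectation under the weighted Curie–Weiss Gibbs measure. -/
def EConf (N : ℕ) (J h : ℝ) (f : Config N → ℝ) : ℝ :=
  (∑ σ : Config N, wConf N J h σ * f σ) / ∑ σ : Config N, wConf N J h σ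

/-- `L₁(m) = 2(1-m)(m² - (1-m)e^{2τ(m)})/((1-m) + e^{2τ(m)})`. -/
def Lone (J h m : ℝ) : ℝ :=
  2*(1-m)*(m^2 - (1-m)*Real.exp (2 * tauFun J h m)) / ((1-m) + Real.exp (2 * tauFun J h m))

/-- `L₂(m) = 4(1-m)(m² + (1-m)e^{2τ(m)})/((1-m) + e^{2τ(m)})`. -/
def Ltwo (J h m : ℝ) : ℝ :=
  4*(1-m)*(m^2 + (1-m)*Real.exp (2 * tauFun J h m)) / ((1-m) + Real.exp (2 * tauFun J h m))

/-- The configuration obtained from `σ` by setting the spins at `u, v` to `s, t`. -/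
def upd {N : ℕ} (σ : Config N) (u v : Fin N) (s t : Bool) : Config N :=
  fun i => if i = u then s else if i = v then t else σ i

/-- The edges of the complete graph, enumerated as ordered pairs `u < v`. -/
def cEdges (N : ℕ) : Finset (Fin N × Fin N) := Finset.univ.filter fun p => p.1 < p.2

/-- The probability of resampling the pair of spins at `(u,v)` to `(s,t)`:
the conditional distribution of `(σ_u, σ_v)` given `(σ_i)_{i ≠ u,v}`. -/
def qCond (N : ℕ) (J h : ℝ) (σ : Config N) (u v : Fin N) (s t : Bool) : ℝ :=
  wConf N J h (upd σ u v s t) / ∑ st : Bool × Bool, wConf N J h (upd σ u v st.1 st.2)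

/-- `E[F(σ, σ') | σ]` for the exchangeable pair `(σ, σ')` obtained by resampling the
spins at a uniformly chosen edge. -/
def condE2 (N : ℕ) (J h : ℝ) (F : Config N → Config N → ℝ) (σ : Config N) : ℝ :=
  ((cEdges N).card : ℝ)⁻¹ * ∑ p ∈ cEdges N, ∑ st : Bool × Bool,
    qCond N J h σ p.1 p.2 st.1 st.2 * F σ (upd σ p.1 p.2 st.1 st.2)

/-- The weight of the Gibbs measure conditioned on the event `S`. -/
def wCond (N : ℕ) (J h : ℝ) (S : Config N → Prop) (σ : Config N) : ℝ :=
  Set.indicator {σ | S σ} (wConf N J h) σ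

/-- `ℙ_ℓ(A) = ℙ(A | S)`, probability under the conditioned Gibbs measure. -/
def probL (N : ℕ) (J h : ℝ) (S A : Config N → Prop) : ℝ :=
  (∑ σ : Config N, Set.indicator {σ | A σ} (wCond N J h S) σ) / ∑ σ : Config N, wCond N J h S σ

/-- Expectation under the conditioned Gibbs measure `ℙ(·|S)`. -/
def EL (N : ℕ) (J h : ℝ) (S : Config N → Prop) (f : Config N → ℝ) : ℝ :=
  (∑ σ : Config N, wCond N J h S σ * f σ) / ∑ σ : Config N, wCond N J h S σ

/-- Resampling probability for the conditioned measure `ℙ(·|S)`. -/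
def qCondL (N : ℕ) (J h : ℝ) (S : Config N → Prop) (σ : Config N) (u v : Fin N)
    (s t : Bool) : ℝ :=
  wCond N J h S (upd σ u v s t) / ∑ st : Bool × Bool, wCond N J h S (upd σ u v st.1 st.2)

/-- `E_ℓ[F(σ, σ') | σ]` for the exchangeable pair under the conditioned measure. -/
def condE2L (N : ℕ) (J h : ℝ) (S : Config N → Prop) (F : Config N → Config N → ℝ)
    (σ : Config N) : ℝ :=
  ((cEdges N).card : ℝ)⁻¹ * ∑ p ∈ cEdges N, ∑ st : Bool × Bool,
    qCondL N J h S σ p.1 p.2 st.1 st.2 * F σ (upd σ p.1 p.2 st.1 st.2)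

/-- The maximizer set `O` of `𝑝̃` on `[0,1]`. -/
def maxSet (J h : ℝ) : Set ℝ :=
  {x | x ∈ Set.Icc (0:ℝ) 1 ∧ ∀ y ∈ Set.Icc (0:ℝ) 1, ptilde J h y ≤ ptilde J h x}

end

/-!
The configurations of positive weight with `N - 2d` up-spins are the monomer sets of the
configurations of `d` dimers, so the law of `M` has the explicit weights
`N! / ((N - 2d)! 2^d d!) * exp (N (a x² + b x))` at density `x = (N - 2d) / N`. By Stirling
these are of order `exp (N * rate x) / √((N - 2d + 1) (d + 1))` up to a common factor, and `rate x`
differs from `𝑝̃ x` by relative entropies: it is at most `𝑝̃ x`, and at least `𝑝̃ m - O((x - m)²)`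
around a fixed point `m` of `g ∘ τ`. If `m` is the only maximizer of `𝑝̃` on the closure of the
conditioning set and `𝑝̃'' m < 0`, then `𝑝̃ x ≤ 𝑝̃ m - c (x - m)²` there. The weights are thus
dominated by a Gaussian profile of width `√N` around `N m`, and comparable to its peak on the
central window of that width, so the second moment of `(M - N m) / √N` stays bounded.
-/

open InformationTheory
open scoped Nat Topology

/-! ### Counting dimer configurations -/

namespace Dimer

variable {N : ℕ}

/-- The involution of the vertices that encodes a dimer configuration, as a permutation. -/
def toPerm (D : Dimer N) : Equiv.Perm (Fin N) :=
  Function.Involutive.toPerm D.1 D.2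

@[simp]
theorem toPerm_apply (D : Dimer N) (i : Fin N) : D.toPerm i = D.1 i := rfl

/-- The number of dimers of a dimer configuration: each dimer is a `2`-cycle of the involution. -/
def numDimers (D : Dimer N) : ℕ :=
  D.toPerm.cycleType.card

theorem toPerm_injective : Function.Injective (toPerm (N := N)) := fun _ _ h =>
  Subtype.ext (congrArg DFunLike.coe h)

theorem cycleType_toPerm (D : Dimer N) :
    D.toPerm.cycleType = Multiset.replicate D.numDimers 2 :=
  Equiv.Perm.cycleType_of_pow_prime_eq_one (Equiv.ext fun i => by simp [pow_two, D.2])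

theorem exists_toPerm_eq {g : Equiv.Perm (Fin N)} {d : ℕ}
    (hg : g.cycleType = Multiset.replicate d 2) : ∃ D : Dimer N, D.toPerm = g := by
  have hsq : g ^ 2 = 1 := Equiv.Perm.pow_prime_eq_one_iff.mpr fun c hc =>
    Multiset.eq_of_mem_replicate (hg ▸ hc)
  exact ⟨⟨g, fun i => by simpa [pow_two] using DFunLike.congr_fun hsq i⟩, Equiv.ext fun _ => rfl⟩

theorem card_monomers_add (D : Dimer N) : #(monomers D) + 2 * D.numDimers = N := by
  have hcompl : monomers D = D.toPerm.supportᶜ := by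
    ext i
    simp [monomers]
  have hsupport : #D.toPerm.support = 2 * D.numDimers := by
    rw [← D.toPerm.sum_cycleType, D.cycleType_toPerm, Multiset.sum_replicate, smul_eq_mul,
      mul_comm]
  have hle := D.toPerm.support.card_le_univ
  rw [hcompl, card_compl, hsupport, Fintype.card_fin]
  rw [hsupport, Fintype.card_fin] at hle
  omega

theorem card_numDimers_eq_card_cycleType (N d : ℕ) :
    #{D : Dimer N | D.numDimers = d} =
      #{g : Equiv.Perm (Fin N) | g.cycleType = Multiset.replicate d 2} := by
  refine card_bij (fun D _ => D.toPerm) (fun D hD => ?_) (fun D _ D' _ h => toPerm_injective h)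
    fun g hg => ?_
  · rw [mem_filter_univ] at hD ⊢
    rw [D.cycleType_toPerm, hD]
  · rw [mem_filter_univ] at hg
    obtain ⟨D, rfl⟩ := exists_toPerm_eq hg
    exact ⟨D, (mem_filter_univ D).mpr (by rw [numDimers, hg, Multiset.card_replicate]), rfl⟩

theorem card_numDimers_mul {d : ℕ} (hd : 2 * d ≤ N) :
    #{D : Dimer N | D.numDimers = d} * ((N - 2 * d)! * 2 ^ d * d !) = N ! := by
  have hcount := Equiv.Perm.card_of_cycleType_mul_eq (Fin N) (Multiset.replicate d 2)
  rw [if_pos ⟨by simpa [mul_comm] using hd, fun a ha => (Multiset.eq_of_mem_replicate ha).ge⟩,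
    Fintype.card_fin, Multiset.sum_replicate, Multiset.prod_replicate, smul_eq_mul,
    mul_comm d 2] at hcount
  have hprod : ∏ n ∈ (Multiset.replicate d 2).toFinset, ((Multiset.replicate d 2).count n)! =
      d ! := by
    rcases eq_or_ne d 0 with rfl | hd0
    · simp
    · simp [Multiset.toFinset_replicate, hd0]
  rw [card_numDimers_eq_card_cycleType, ← hcount, hprod]

theorem sum_comp_card_monomers {M : Type*} [AddCommMonoid M] (N : ℕ) (F : ℕ → M) :
    ∑ D : Dimer N, F #(monomers D) =
      ∑ d ∈ range (N / 2 + 1), #{D : Dimer N | D.numDimers = d} • F (N - 2 * d) := by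
  rw [← sum_fiberwise_of_maps_to (s := univ) (g := numDimers) (t := range (N / 2 + 1))
    fun D _ => mem_range.mpr (by have := D.card_monomers_add; omega)]
  refine sum_congr rfl fun d _ => sum_eq_card_nsmul fun D hD => ?_
  have hD' := D.card_monomers_add
  rw [(mem_filter_univ D).mp hD] at hD'
  rw [Nat.eq_sub_of_add_eq hD']

end Dimer

theorem sum_Dcount_mul (N : ℕ) (F : ℕ → ℝ) :
    ∑ σ : Config N, Dcount N σ * F (Msum σ) = ∑ D : Dimer N, F #(monomers D) := by
  have hspins : ∀ (D : Dimer N) (σ : Config N),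
      monomers D = ASet σ ↔ (fun i => decide (D.1 i = i)) = σ := fun D σ => by
    simp only [monomers, ASet, Finset.ext_iff, mem_filter_univ, funext_iff]
    exact forall_congr' fun i => by cases σ i <;> simp
  rw [← sum_fiberwise univ (fun D : Dimer N => fun i => decide (D.1 i = i))]
  refine sum_congr rfl fun σ _ => ?_
  rw [Dcount, ← nsmul_eq_mul]
  simp only [hspins]
  refine (sum_eq_card_nsmul fun D hD => ?_).symm
  rw [(hspins D σ).mpr ((mem_filter_univ D).mp hD), Msum]

/-- The monomer density of a configuration with `d` dimers on `N` vertices. -/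
noncomputable def density (N d : ℕ) : ℝ := ((N : ℝ) - 2 * d) / N

theorem natCast_sub_div_eq_density {N d : ℕ} (hd : 2 * d ≤ N) :
    ((N - 2 * d : ℕ) : ℝ) / N = density N d := by
  rw [density, Nat.cast_sub hd]
  push_cast
  rfl

theorem density_mem_Icc {N d : ℕ} (hd : 2 * d ≤ N) : density N d ∈ Set.Icc 0 1 := by
  rw [← natCast_sub_div_eq_density hd]
  exact ⟨by positivity, div_le_one_of_le₀ (by exact_mod_cast Nat.sub_le N _) (by positivity)⟩

theorem mul_sq_density_sub {N : ℕ} (hN : N ≠ 0) (d : ℕ) (m : ℝ) :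
    N * (density N d - m) ^ 2 = 4 * ((d - N * (1 - m) / 2) / √N) ^ 2 := by
  have hN' : (N : ℝ) ≠ 0 := Nat.cast_ne_zero.mpr hN
  rw [density, div_pow, Real.sq_sqrt N.cast_nonneg]
  field_simp
  ring

/-- The total weight of the spin configurations with `N - 2 * d` up-spins, i.e. of those that are
the monomer set of a configuration of `d` dimers: `N! / ((N - 2d)! 2^d d!)` is the number of these
dimer configurations. -/
noncomputable def levelWeight (N : ℕ) (J h : ℝ) (d : ℕ) : ℝ :=
  N ! / ((N - 2 * d)! * 2 ^ d * d !) *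
    exp (N * (J * density N d ^ 2 + bIMD N J h * density N d))

theorem levelWeight_pos (N : ℕ) (J h : ℝ) (d : ℕ) : 0 < levelWeight N J h d := by
  unfold levelWeight
  positivity

theorem sum_wConf_mul (N : ℕ) (J h : ℝ) (F : ℕ → ℝ) :
    ∑ σ : Config N, wConf N J h σ * F (Msum σ) =
      ∑ d ∈ range (N / 2 + 1), levelWeight N J h d * F (N - 2 * d) := by
  simp only [wConf, mConf, mul_assoc (Dcount N _ : ℝ)]
  rw [sum_Dcount_mul N fun k => exp (N * (J * (k / N : ℝ) ^ 2 + bIMD N J h * (k / N))) * F k,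
    Dimer.sum_comp_card_monomers N
      fun k => exp (N * (J * (k / N : ℝ) ^ 2 + bIMD N J h * (k / N))) * F k]
  refine sum_congr rfl fun d hd => ?_
  have hd' : 2 * d ≤ N := by rw [mem_range] at hd; omega
  have hcard : (#{D : Dimer N | D.numDimers = d} : ℝ) = N ! / ((N - 2 * d)! * 2 ^ d * d !) :=
    eq_div_of_mul_eq (by positivity) (by exact_mod_cast Dimer.card_numDimers_mul hd')
  rw [natCast_sub_div_eq_density hd', nsmul_eq_mul, hcard, levelWeight, ← mul_assoc]

open Classical in
/-- The numbers of dimers compatible with a monomer density in `S`. -/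
noncomputable def dimerLevels (N : ℕ) (S : Set ℝ) : Finset ℕ :=
  {d ∈ range (N / 2 + 1) | density N d ∈ S}

theorem mem_dimerLevels {N d : ℕ} {S : Set ℝ} :
    d ∈ dimerLevels N S ↔ 2 * d ≤ N ∧ density N d ∈ S := by
  classical
  rw [dimerLevels, mem_filter, mem_range]
  exact and_congr_left' (by omega)

theorem EL_mConf_mem (N : ℕ) (J h : ℝ) (S : Set ℝ) (F : ℕ → ℝ) :
    EL N J h (fun σ => mConf σ ∈ S) (fun σ => F (Msum σ)) =
      (∑ d ∈ dimerLevels N S, levelWeight N J h d * F (N - 2 * d)) /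
        ∑ d ∈ dimerLevels N S, levelWeight N J h d := by
  classical
  have hsum (F : ℕ → ℝ) : ∑ σ : Config N, wCond N J h (fun σ => mConf σ ∈ S) σ * F (Msum σ) =
      ∑ d ∈ dimerLevels N S, levelWeight N J h d * F (N - 2 * d) := by
    have hind (σ : Config N) : wCond N J h (fun σ => mConf σ ∈ S) σ * F (Msum σ) =
        wConf N J h σ * if (Msum σ / N : ℝ) ∈ S then F (Msum σ) else 0 := by
      simp [wCond, Set.indicator_apply, mConf]
    simp only [hind]
    rw [sum_wConf_mul N J h fun k => if (k / N : ℝ) ∈ S then F k else 0, dimerLevels, sum_filter]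
    refine sum_congr rfl fun d hd => ?_
    rw [natCast_sub_div_eq_density (by rw [mem_range] at hd; omega), mul_ite, mul_zero]
  have hone := hsum fun _ => 1
  simp only [mul_one] at hone
  rw [EL, hsum, hone]

/-! ### Stirling bounds -/

/-- Stirling's approximation of `n !` without its constant; `n + 1` instead of `n` under the root
makes it positive at `n = 0`. -/
noncomputable def stirlingApprox (n : ℕ) : ℝ := √(n + 1) * (n / exp 1) ^ n

theorem stirlingApprox_eq (n : ℕ) :
    stirlingApprox n = √(n + 1) * exp (n * log n - n) := by
  rcases n.eq_zero_or_pos with rfl | hn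
  · simp [stirlingApprox]
  · rw [stirlingApprox, exp_sub, mul_comm (n : ℝ), exp_mul, exp_log (by positivity), rpow_natCast,
      div_pow, ← exp_nat_mul, mul_one]

theorem stirlingApprox_pos (n : ℕ) : 0 < stirlingApprox n := by
  rw [stirlingApprox_eq]
  positivity

theorem stirlingApprox_le_factorial (n : ℕ) : stirlingApprox n ≤ n ! := by
  rcases n.eq_zero_or_pos with rfl | hn
  · simp [stirlingApprox]
  · refine le_trans ?_ (Stirling.le_factorial_stirling n)
    have hn' : (1 : ℝ) ≤ n := by exact_mod_cast hn
    rw [stirlingApprox]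
    gcongr
    nlinarith [pi_gt_three]

theorem factorial_le_exp_one_mul_stirlingApprox (n : ℕ) : n ! ≤ exp 1 * stirlingApprox n := by
  rcases n with _ | n
  · simp [stirlingApprox]
  · have hseq : Stirling.stirlingSeq (n + 1) ≤ exp 1 / √2 :=
      Stirling.stirlingSeq_one ▸ Stirling.stirlingSeq'_antitone n.zero_le
    rw [Stirling.stirlingSeq, div_le_iff₀ (by positivity), sqrt_mul zero_le_two] at hseq
    calc ((n + 1)! : ℝ)
        ≤ exp 1 / √2 * (√2 * √(n + 1 : ℕ) * ((n + 1 : ℕ) / exp 1) ^ (n + 1)) := hseq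
      _ = exp 1 * (√(n + 1 : ℕ) * ((n + 1 : ℕ) / exp 1) ^ (n + 1)) := by field_simp
      _ ≤ exp 1 * stirlingApprox (n + 1) := by
        rw [stirlingApprox]
        gcongr
        exact le_add_of_nonneg_right zero_le_one

/-- The exponential rate of `levelWeight` at monomer density `x`. -/
noncomputable def rateFun (J h x : ℝ) : ℝ :=
  negMulLog x + negMulLog (1 - x) / 2 + (x - 1) / 2 + x * tauFun J h x - J * x ^ 2

/-- The part of the Stirling approximation of `levelWeight` that is common to all levels. -/
noncomputable def levelNorm (N : ℕ) : ℝ :=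
  N ! * exp (N - N / 2 * log N)

theorem levelNorm_pos (N : ℕ) : 0 < levelNorm N := by
  unfold levelNorm
  positivity

/-- The Stirling approximation of `levelWeight`. -/
noncomputable def levelApprox (N : ℕ) (J h : ℝ) (d : ℕ) : ℝ :=
  levelNorm N * exp (N * rateFun J h (density N d)) / (√((N - 2 * d : ℕ) + 1) * √(d + 1))

theorem mul_log_mul (a x : ℝ) : a * x * log (a * x) = x * (a * log a) - a * negMulLog x := by
  have hmul := negMulLog_mul a x
  simp only [negMulLog] at hmul ⊢
  linarith

theorem levelApprox_eq {N d : ℕ} (J h : ℝ) (hN : N ≠ 0) (hd : 2 * d ≤ N) :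
    levelApprox N J h d = N ! / (stirlingApprox (N - 2 * d) * 2 ^ d * stirlingApprox d) *
      exp (N * (J * density N d ^ 2 + bIMD N J h * density N d)) := by
  have hN' : (0 : ℝ) < N := by exact_mod_cast hN.bot_lt
  set x := density N d with hx
  have hk : ((N - 2 * d : ℕ) : ℝ) = N * x := by
    rw [hx, ← natCast_sub_div_eq_density hd, mul_div_cancel₀ _ hN'.ne']
  have hd' : (d : ℝ) = N / 2 * (1 - x) := by rw [hx, density]; field_simp; ring
  have hpow : (2 : ℝ) ^ d = exp (d * log 2) := by
    rw [mul_comm, exp_mul, exp_log zero_lt_two, rpow_natCast]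
  have hexp : N - N / 2 * log N + N * rateFun J h x =
      N * (J * x ^ 2 + bIMD N J h * x) -
        ((N - 2 * d : ℕ) * log (N - 2 * d : ℕ) - (N - 2 * d : ℕ) + d * log 2 +
          (d * log d - d)) := by
    rw [hk, hd', mul_log_mul, mul_log_mul, log_div hN'.ne' two_ne_zero]
    unfold rateFun bIMD tauFun
    ring
  rw [levelApprox, ← hx, levelNorm, mul_assoc, ← exp_add, hexp, exp_sub, exp_add, exp_add,
    stirlingApprox_eq, stirlingApprox_eq, hpow]
  field_simp

theorem levelWeight_le_levelApprox {N d : ℕ} (J h : ℝ) (hN : N ≠ 0) (hd : 2 * d ≤ N) :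
    levelWeight N J h d ≤ levelApprox N J h d := by
  have hk := stirlingApprox_pos (N - 2 * d)
  have hd' := stirlingApprox_pos d
  rw [levelApprox_eq J h hN hd, levelWeight]
  gcongr <;> exact stirlingApprox_le_factorial _

theorem levelApprox_le_levelWeight {N d : ℕ} (J h : ℝ) (hN : N ≠ 0) (hd : 2 * d ≤ N) :
    levelApprox N J h d ≤ exp 1 ^ 2 * levelWeight N J h d := by
  have hk := stirlingApprox_pos (N - 2 * d)
  have hd' := stirlingApprox_pos d
  have hfactorial : (N - 2 * d)! * 2 ^ d * d ! ≤
      exp 1 ^ 2 * (stirlingApprox (N - 2 * d) * 2 ^ d * stirlingApprox d) := calc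
    _ ≤ exp 1 * stirlingApprox (N - 2 * d) * 2 ^ d * (exp 1 * stirlingApprox d) := by
      gcongr <;> exact factorial_le_exp_one_mul_stirlingApprox _
    _ = _ := by ring
  rw [levelApprox_eq J h hN hd, levelWeight, ← mul_assoc]
  gcongr
  calc (N ! : ℝ) / (stirlingApprox (N - 2 * d) * 2 ^ d * stirlingApprox d)
      = exp 1 ^ 2 *
          (N ! / (exp 1 ^ 2 * (stirlingApprox (N - 2 * d) * 2 ^ d * stirlingApprox d))) := by
        field_simp
    _ ≤ exp 1 ^ 2 * (N ! / ((N - 2 * d)! * 2 ^ d * d !)) := by gcongr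

/-! ### The rate function and `ptilde` -/

theorem exp_four_mul (y : ℝ) : exp (4 * y) = exp (2 * y) ^ 2 := by
  rw [← exp_nat_mul]
  ring_nf

theorem gFun_sq (y : ℝ) : gFun y ^ 2 = (1 - gFun y) * exp (2 * y) := by
  have hsqrt := sq_sqrt (show 0 ≤ exp (4 * y) + 4 * exp (2 * y) by positivity)
  unfold gFun
  rw [exp_four_mul] at hsqrt ⊢
  linear_combination hsqrt / 4

theorem gFun_pos (y : ℝ) : 0 < gFun y := by
  have hlt : exp (2 * y) < √(exp (4 * y) + 4 * exp (2 * y)) :=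
    lt_sqrt_of_sq_lt (by rw [exp_four_mul]; linarith [exp_pos (2 * y)])
  unfold gFun
  linarith

theorem gFun_lt_one (y : ℝ) : gFun y < 1 := by
  have hprod : 0 < (1 - gFun y) * exp (2 * y) := gFun_sq y ▸ pow_pos (gFun_pos y) 2
  linarith [pos_of_mul_pos_left hprod (exp_pos _).le]

theorem log_gFun_sub_log_one_sub_gFun (y : ℝ) : log (gFun y) - log (1 - gFun y) / 2 = y := by
  have hg : 1 - gFun y ≠ 0 := (sub_pos.mpr (gFun_lt_one y)).ne'
  have hlog := congrArg log (gFun_sq y)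
  rw [log_pow, log_mul hg (exp_pos _).ne', log_exp, Nat.cast_two] at hlog
  linarith

theorem contDiff_gFun {n : WithTop ℕ∞} : ContDiff ℝ n gFun := by
  unfold gFun
  exact ((ContDiff.sqrt (by fun_prop) fun x => by positivity).sub (by fun_prop)).div_const _

theorem contDiff_ptilde (J h : ℝ) {n : WithTop ℕ∞} : ContDiff ℝ n (ptilde J h) := by
  have hg : ContDiff ℝ n fun m => gFun (tauFun J h m) :=
    contDiff_gFun.comp (by unfold tauFun; fun_prop)
  have hlog : ContDiff ℝ n fun m => log (1 - gFun (tauFun J h m)) :=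
    (contDiff_const.sub hg).log fun m => (sub_pos.mpr (gFun_lt_one _)).ne'
  unfold ptilde
  fun_prop

theorem mul_klFun_div {a : ℝ} (ha : a ≠ 0) (x : ℝ) :
    a * klFun (x / a) = a - x - x * log a - negMulLog x := by
  rcases eq_or_ne x 0 with rfl | hx
  · simp [klFun]
  · rw [klFun, log_div hx ha, negMulLog]
    field_simp
    ring

theorem klFun_le_sq {t : ℝ} (ht : 0 ≤ t) : klFun t ≤ (t - 1) ^ 2 := by
  have hlog : t * log t ≤ t * (t - 1) := by
    rcases ht.eq_or_lt with rfl | ht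
    · simp
    · exact mul_le_mul_of_nonneg_left (log_le_sub_one_of_pos ht) ht.le
  rw [klFun]
  linarith

/-- The `klFun` terms are nonnegative and vanish to second order at `x = gFun (tauFun J h y)`. So
`y = x` yields an upper bound for `rateFun`, and a fixed point `y` a quadratic lower bound. -/
theorem rateFun_eq (J h x y : ℝ) :
    rateFun J h x = ptilde J h y + J * (x - y) ^ 2 -
      gFun (tauFun J h y) * klFun (x / gFun (tauFun J h y)) -
      (1 - gFun (tauFun J h y)) * klFun ((1 - x) / (1 - gFun (tauFun J h y))) / 2 := by
  have hτ : tauFun J h x = tauFun J h y + 2 * J * (x - y) := by unfold tauFun; ring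
  rw [mul_klFun_div (gFun_pos _).ne', mul_klFun_div (sub_pos.mpr (gFun_lt_one _)).ne', rateFun,
    ptilde, hτ]
  linear_combination -x * log_gFun_sub_log_one_sub_gFun (tauFun J h y)

theorem rateFun_le_ptilde (J h : ℝ) {x : ℝ} (hx : x ∈ Set.Icc 0 1) :
    rateFun J h x ≤ ptilde J h x := by
  have hg := gFun_pos (tauFun J h x)
  have hg' := sub_pos.mpr (gFun_lt_one (tauFun J h x))
  have hkl := mul_nonneg hg.le (klFun_nonneg (div_nonneg hx.1 hg.le))
  have hkl' := mul_nonneg hg'.le (klFun_nonneg (div_nonneg (sub_nonneg.mpr hx.2) hg'.le))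
  rw [rateFun_eq J h x x]
  linarith

theorem ptilde_sub_le_rateFun {J h m x : ℝ} (hfix : m = gFun (tauFun J h m))
    (hx : x ∈ Set.Icc 0 1) :
    ptilde J h m - (1 / m + 1 / (2 * (1 - m)) - J) * (x - m) ^ 2 ≤ rateFun J h x := by
  have hm : 0 < m := hfix ▸ gFun_pos _
  have hm' : 0 < 1 - m := sub_pos.mpr (hfix ▸ gFun_lt_one _)
  have hkl : m * klFun (x / m) ≤ 1 / m * (x - m) ^ 2 := calc
    _ ≤ m * (x / m - 1) ^ 2 := by gcongr; exact klFun_le_sq (div_nonneg hx.1 hm.le)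
    _ = _ := by field_simp
  have hkl' : (1 - m) * klFun ((1 - x) / (1 - m)) ≤ 1 / (1 - m) * (x - m) ^ 2 := calc
    _ ≤ (1 - m) * ((1 - x) / (1 - m) - 1) ^ 2 := by
      gcongr; exact klFun_le_sq (div_nonneg (sub_nonneg.mpr hx.2) hm'.le)
    _ = _ := by field_simp; ring
  have hsplit : 1 / (2 * (1 - m)) = 1 / (1 - m) / 2 := by field_simp
  rw [rateFun_eq J h x m, ← hfix, hsplit]
  linarith

/-! ### Quadratic decay away from a strict maximum -/

theorem exists_eventually_le_sub_mul_sq {f : ℝ → ℝ} {m : ℝ} (hf : ContDiff ℝ 2 f)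
    (hd : deriv f m = 0) (hdd : iteratedDeriv 2 f m < 0) :
    ∃ c > 0, ∀ᶠ x in 𝓝 m, f x ≤ f m - c * (x - m) ^ 2 := by
  rw [iteratedDeriv_succ, iteratedDeriv_one] at hdd
  set c := -deriv (deriv f) m / 4 with hc
  have hsq (x : ℝ) : HasDerivAt (fun x => c * (x - m) ^ 2) (2 * c * (x - m)) x := by
    refine ((((hasDerivAt_id' x).sub_const m).pow 2).const_mul c).congr_deriv ?_
    ring
  have hderiv : deriv (fun x => f x + c * (x - m) ^ 2) = fun x => deriv f x + 2 * c * (x - m) :=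
    funext fun x => ((hf.differentiable two_ne_zero x).hasDerivAt.add (hsq x)).deriv
  have hderiv2 : HasDerivAt (fun x => deriv f x + 2 * c * (x - m))
      (deriv (deriv f) m + 2 * c) m := by
    refine ((hf.differentiable_deriv_two m).hasDerivAt.add
      (((hasDerivAt_id' m).sub_const m).const_mul (2 * c))).congr_deriv ?_
    ring
  have hmax : IsLocalMax (fun x => f x + c * (x - m) ^ 2) m := by
    refine isLocalMax_of_deriv_deriv_neg ?_ ?_ ?_
    · rw [hderiv, hderiv2.deriv]
      linarith
    · rw [hderiv]
      simp [hd]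
    · exact (hf.continuous.add (by fun_prop)).continuousAt
  refine ⟨c, by linarith, hmax.mono fun x hx => ?_⟩
  simp only [sub_self] at hx
  linarith

theorem exists_forall_le_sub_mul_sq {f : ℝ → ℝ} {m : ℝ} {K : Set ℝ} (hK : IsCompact K)
    (hf : Continuous f) (hloc : ∃ c > 0, ∀ᶠ x in 𝓝 m, f x ≤ f m - c * (x - m) ^ 2)
    (hlt : ∀ x ∈ K, x ≠ m → f x < f m) :
    ∃ c > 0, ∀ x ∈ K, f x ≤ f m - c * (x - m) ^ 2 := by
  refine hK.induction_on (p := fun t => ∃ c > 0, ∀ x ∈ t, f x ≤ f m - c * (x - m) ^ 2)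
    ⟨1, one_pos, by simp⟩ ?mono ?union ?nhds
  case mono => exact fun s t hst ⟨c, hc, ht⟩ => ⟨c, hc, fun x hx => ht x (hst hx)⟩
  case union =>
    rintro s t ⟨c, hc, hs⟩ ⟨c', hc', ht⟩
    refine ⟨min c c', lt_min hc hc', fun x hx => ?_⟩
    have hmin := mul_le_mul_of_nonneg_right (min_le_left c c') (sq_nonneg (x - m))
    have hmin' := mul_le_mul_of_nonneg_right (min_le_right c c') (sq_nonneg (x - m))
    rcases hx with hx | hx
    · linarith [hs x hx]
    · linarith [ht x hx]
  case nhds =>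
    intro y hy
    rcases eq_or_ne y m with rfl | hym
    · obtain ⟨c, hc, h⟩ := hloc
      exact ⟨_, mem_nhdsWithin_of_mem_nhds h, c, hc, fun x hx => hx⟩
    · have hpos : 0 < (y - m) ^ 2 := sq_pos_of_ne_zero (sub_ne_zero.mpr hym)
      obtain ⟨c, hc, hcy⟩ := exists_between (div_pos (sub_pos.mpr (hlt y hy hym)) hpos)
      rw [lt_div_iff₀ hpos] at hcy
      have hev : ∀ᶠ x in 𝓝 y, f x + c * (x - m) ^ 2 < f m :=
        (by fun_prop : Continuous fun x => f x + c * (x - m) ^ 2).continuousAt.eventually_lt_const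
          (by linarith)
      exact ⟨_, mem_nhdsWithin_of_mem_nhds hev, c, hc, fun x hx => (lt_sub_iff_add_lt.mpr hx).le⟩

/-! ### Gaussian sums -/

theorem sum_pow_natAbs_sub_le {r : ℝ} (hr : 0 ≤ r) (hr1 : r < 1) (n : ℤ) (I : Finset ℤ) :
    ∑ d ∈ I, r ^ (d - n).natAbs ≤ 2 * (1 - r)⁻¹ := by
  have hgeom := hasSum_geometric_of_lt_one hr hr1
  have hneg : HasSum (fun k : ℕ => r ^ (-((k : ℤ) + 1)).natAbs) (r * (1 - r)⁻¹) := by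
    refine (hgeom.mul_left r).congr_fun fun k => ?_
    rw [← pow_succ', Int.natAbs_neg, ← Nat.cast_succ, Int.natAbs_natCast]
  have hsum : HasSum (fun k : ℤ => r ^ k.natAbs) ((1 - r)⁻¹ + r * (1 - r)⁻¹) :=
    HasSum.of_nat_of_neg_add_one (by simpa using hgeom) hneg
  have hshift := (Equiv.subRight n).hasSum_iff.mpr hsum
  have hle : r * (1 - r)⁻¹ ≤ (1 - r)⁻¹ :=
    mul_le_of_le_one_left (inv_nonneg.mpr (sub_nonneg.mpr hr1.le)) hr1.le
  have hI := sum_le_hasSum I (fun d _ => pow_nonneg hr _) hshift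
  simp only [Equiv.subRight_apply] at hI
  linarith

theorem inv_one_sub_exp_neg_le {t : ℝ} (ht : 0 < t) : (1 - exp (-t))⁻¹ ≤ 1 + 1 / t := by
  have hexp : exp (-t) ≤ (1 + t)⁻¹ := by
    rw [exp_neg]
    exact inv_anti₀ (by linarith) (by linarith [add_one_le_exp t])
  have hle : t / (1 + t) ≤ 1 - exp (-t) := calc
    t / (1 + t) = 1 - (1 + t)⁻¹ := by field_simp; ring
    _ ≤ 1 - exp (-t) := by linarith
  calc (1 - exp (-t))⁻¹ ≤ (t / (1 + t))⁻¹ := inv_anti₀ (by positivity) hle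
    _ = 1 + 1 / t := by field_simp; ring

theorem exp_neg_mul_sq_le_pow_natAbs {c s : ℝ} (hc : 0 < c) (hs : 1 ≤ s) (a : ℝ) (d : ℤ) :
    exp (-c * ((d - a) / s) ^ 2) ≤ exp (2 * c) * exp (-(c / s)) ^ (d - ⌊a⌋).natAbs := by
  have hs0 : 0 < s := zero_lt_one.trans_le hs
  have hfloor : |(d : ℝ) - ⌊a⌋| ≤ |d - a| + s :=
    calc |(d : ℝ) - ⌊a⌋| ≤ |d - a| + |a - ⌊a⌋| := abs_sub_le _ _ _
      _ ≤ |d - a| + s := by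
        rw [Int.self_sub_floor, Int.abs_fract]
        linarith [Int.fract_lt_one a]
  have hsq : |(d : ℝ) - ⌊a⌋| / s ≤ ((d - a) / s) ^ 2 + 2 :=
    calc |(d : ℝ) - ⌊a⌋| / s ≤ (|d - a| + s) / s := by gcongr
      _ = |(d - a) / s| + 1 := by rw [abs_div, abs_of_pos hs0]; field_simp
      _ ≤ ((d - a) / s) ^ 2 + 2 := by
        rw [← sq_abs]
        nlinarith [sq_nonneg (|(d - a) / s| - 1)]
  rw [← exp_nat_mul, ← exp_add, Nat.cast_natAbs, Int.cast_abs]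
  push_cast
  gcongr
  calc -c * ((d - a) / s) ^ 2 ≤ 2 * c - c * (|(d : ℝ) - ⌊a⌋| / s) := by nlinarith
    _ = 2 * c + |(d : ℝ) - ⌊a⌋| * -(c / s) := by ring

theorem sum_exp_neg_mul_sq_le {c s : ℝ} (hc : 0 < c) (hs : 1 ≤ s) (a : ℝ) (I : Finset ℤ) :
    ∑ d ∈ I, exp (-c * ((d - a) / s) ^ 2) ≤ 2 * exp (2 * c) * (1 + s / c) := by
  have ht : 0 < c / s := div_pos hc (zero_lt_one.trans_le hs)
  have hr1 : exp (-(c / s)) < 1 := exp_lt_one_iff.mpr (neg_neg_of_pos ht)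
  calc ∑ d ∈ I, exp (-c * ((d - a) / s) ^ 2)
      ≤ ∑ d ∈ I, exp (2 * c) * exp (-(c / s)) ^ (d - ⌊a⌋).natAbs :=
        sum_le_sum fun d _ => exp_neg_mul_sq_le_pow_natAbs hc hs a d
    _ ≤ exp (2 * c) * (2 * (1 - exp (-(c / s)))⁻¹) := by
      rw [← mul_sum]
      gcongr
      exact sum_pow_natAbs_sub_le (exp_pos _).le hr1 _ _
    _ ≤ exp (2 * c) * (2 * (1 + 1 / (c / s))) := by
      gcongr
      exact inv_one_sub_exp_neg_le ht
    _ = 2 * exp (2 * c) * (1 + s / c) := by rw [one_div_div]; ring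

theorem mul_exp_neg_mul_le {c : ℝ} (hc : 0 < c) (t : ℝ) :
    t * exp (-c * t) ≤ 2 / c * exp (-(c / 2) * t) := by
  have hle : c / 2 * t ≤ exp (c / 2 * t) := by linarith [add_one_le_exp (c / 2 * t)]
  calc t * exp (-c * t) = 2 / c * ((c / 2 * t) * exp (-c * t)) := by field_simp
    _ ≤ 2 / c * (exp (c / 2 * t) * exp (-c * t)) := by gcongr
    _ = 2 / c * exp (-(c / 2) * t) := by rw [← exp_add]; ring_nf

theorem sum_mul_sq_le_of_le_exp_neg {c s B a : ℝ} (hc : 0 < c) (hs : 1 ≤ s) (hB : 0 ≤ B)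
    {I : Finset ℕ} {w : ℕ → ℝ} (hw : ∀ d ∈ I, w d ≤ B * exp (-c * ((d - a) / s) ^ 2)) :
    ∑ d ∈ I, w d * ((d - a) / s) ^ 2 ≤ 4 / c * exp c * (1 + 2 / c) * (B * s) := by
  have hterm (d : ℕ) (hd : d ∈ I) :
      w d * ((d - a) / s) ^ 2 ≤ B * (2 / c * exp (-(c / 2) * ((d - a) / s) ^ 2)) := calc
    _ ≤ B * exp (-c * ((d - a) / s) ^ 2) * ((d - a) / s) ^ 2 := by gcongr; exact hw d hd
    _ = B * (((d - a) / s) ^ 2 * exp (-c * ((d - a) / s) ^ 2)) := by ring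
    _ ≤ B * (2 / c * exp (-(c / 2) * ((d - a) / s) ^ 2)) :=
      mul_le_mul_of_nonneg_left (mul_exp_neg_mul_le hc _) hB
  have hgauss := sum_exp_neg_mul_sq_le (half_pos hc) hs a (I.map Nat.castEmbedding)
  simp only [sum_map, Nat.castEmbedding_apply, Int.cast_natCast] at hgauss
  calc ∑ d ∈ I, w d * ((d - a) / s) ^ 2
      ≤ B * (2 / c * ∑ d ∈ I, exp (-(c / 2) * ((d - a) / s) ^ 2)) := by
        rw [mul_sum, mul_sum]
        exact sum_le_sum hterm
    _ ≤ B * (2 / c * (2 * exp (2 * (c / 2)) * (s + s / (c / 2)))) := by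
      gcongr
      exact hgauss.trans (by gcongr)
    _ = 4 / c * exp c * (1 + 2 / c) * (B * s) := by
      rw [mul_div_cancel₀ c two_ne_zero]
      field_simp
      ring

theorem mul_half_le_sum {a s b : ℝ} (ha : 0 ≤ a) (hs : 1 ≤ s) (hb : 0 ≤ b) {I : Finset ℕ}
    {w : ℕ → ℝ} (hw : ∀ d ∈ I, 0 ≤ w d)
    (hnear : ∀ d : ℕ, |(d : ℝ) - a| ≤ s → d ∈ I ∧ b ≤ w d) :
    b * (s / 2) ≤ ∑ d ∈ I, w d := by
  have hnear' (d : ℕ) (hd : d ∈ Ico ⌈a⌉₊ (⌈a⌉₊ + ⌊s⌋₊)) : d ∈ I ∧ b ≤ w d := by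
    rw [mem_Ico, Nat.ceil_le] at hd
    have hlt : (d : ℝ) + 1 ≤ ⌈a⌉₊ + ⌊s⌋₊ := by exact_mod_cast hd.2
    refine hnear d (abs_le.mpr ⟨by linarith, ?_⟩)
    linarith [Nat.ceil_lt_add_one ha, Nat.floor_le (zero_le_one.trans hs)]
  have hfloor : s / 2 ≤ ⌊s⌋₊ := by
    have hone : (1 : ℝ) ≤ ⌊s⌋₊ := by exact_mod_cast Nat.one_le_floor_iff s |>.mpr hs
    linarith [Nat.lt_floor_add_one s]
  calc b * (s / 2) ≤ b * ⌊s⌋₊ := by gcongr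
    _ = ∑ d ∈ Ico ⌈a⌉₊ (⌈a⌉₊ + ⌊s⌋₊), b := by
      rw [sum_const, Nat.card_Ico, Nat.add_sub_cancel_left, nsmul_eq_mul, mul_comm]
    _ ≤ ∑ d ∈ Ico ⌈a⌉₊ (⌈a⌉₊ + ⌊s⌋₊), w d := sum_le_sum fun d hd => (hnear' d hd).2
    _ ≤ ∑ d ∈ I, w d :=
      sum_le_sum_of_subset_of_nonneg (fun d hd => (hnear' d hd).1) fun d hd _ => hw d hd

/-! ### Level weights near and away from a maximizer -/

/-- The order of `levelWeight` at monomer densities within `O(1 / √N)` of `m`. -/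
noncomputable def peakWeight (N : ℕ) (J h m : ℝ) : ℝ :=
  levelNorm N * exp (N * ptilde J h m) / N

theorem peakWeight_nonneg (N : ℕ) (J h m : ℝ) : 0 ≤ peakWeight N J h m := by
  have := levelNorm_pos N
  unfold peakWeight
  positivity

theorem le_mul_add_one_mul_exp_sq {m c n x : ℝ} (hm : 0 < m) (hc : 0 < c) (hn : 0 ≤ n)
    (hx : 0 ≤ x) :
    n ≤ (2 / m + 1 / (c * m ^ 2)) * (n * x + 1) * exp (c * (n * (x - m) ^ 2)) := by
  have hnx : 0 ≤ n * x := mul_nonneg hn hx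
  have hexp : c * (n * (x - m) ^ 2) ≤ exp (c * (n * (x - m) ^ 2)) := by
    linarith [add_one_le_exp (c * (n * (x - m) ^ 2))]
  have hone : 1 ≤ exp (c * (n * (x - m) ^ 2)) := one_le_exp (by positivity)
  have hsq : m ^ 2 ≤ 2 * m * x + (x - m) ^ 2 := by nlinarith [sq_nonneg x]
  calc n = 1 / m ^ 2 * (n * m ^ 2) := by field_simp
    _ ≤ 1 / m ^ 2 * (n * (2 * m * x + (x - m) ^ 2)) := by gcongr
    _ = 2 / m * (n * x) * 1 + 1 / (c * m ^ 2) * 1 * (c * (n * (x - m) ^ 2)) := by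
      field_simp
    _ ≤ 2 / m * (n * x + 1) * exp (c * (n * (x - m) ^ 2)) +
        1 / (c * m ^ 2) * (n * x + 1) * exp (c * (n * (x - m) ^ 2)) := by
      gcongr <;> linarith
    _ = (2 / m + 1 / (c * m ^ 2)) * (n * x + 1) * exp (c * (n * (x - m) ^ 2)) := by ring

theorem exists_le_sqrt_mul_sqrt_mul_exp {m c : ℝ} (hm : m ∈ Set.Ioo 0 1) (hc : 0 < c) :
    ∃ C : ℝ, 0 ≤ C ∧ ∀ N d : ℕ, N ≠ 0 → 2 * d ≤ N →
      N ≤ C * (√((N - 2 * d : ℕ) + 1) * √(d + 1)) * exp (c * (N * (density N d - m) ^ 2)) := by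
  have hm' : 0 < 1 - m := sub_pos.mpr hm.2
  set C₁ := 2 / m + 1 / (c * m ^ 2)
  set C₂ := 2 / (1 - m) + 1 / (c * (1 - m) ^ 2)
  have hC₁ : 0 ≤ C₁ := by have := hm.1; positivity
  have hC₂ : 0 ≤ C₂ := by positivity
  refine ⟨√(C₁ * (2 * C₂)), sqrt_nonneg _, fun N d hN hd => ?_⟩
  have hN' : (N : ℝ) ≠ 0 := Nat.cast_ne_zero.mpr hN
  have hx := density_mem_Icc hd
  set x := density N d with hxdef
  set e := exp (c * (N * (x - m) ^ 2))
  have he : 0 < e := exp_pos _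
  have hk : (N : ℝ) * x = (N - 2 * d : ℕ) := by
    rw [hxdef, ← natCast_sub_div_eq_density hd, mul_div_cancel₀ _ hN']
  have hd' : (N : ℝ) * (1 - x) = 2 * d := by rw [hxdef, density]; field_simp; ring
  have hmono : (N : ℝ) ≤ C₁ * ((N - 2 * d : ℕ) + 1) * e := by
    rw [← hk]
    exact le_mul_add_one_mul_exp_sq hm.1 hc N.cast_nonneg hx.1
  have hdim : (N : ℝ) ≤ 2 * C₂ * (d + 1) * e := by
    have hle := le_mul_add_one_mul_exp_sq hm' hc N.cast_nonneg (sub_nonneg.mpr hx.2)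
    rw [hd', show 1 - x - (1 - m) = -(x - m) by ring, neg_sq] at hle
    nlinarith [mul_nonneg hC₂ he.le]
  rw [← sqrt_mul (by positivity), ← sqrt_mul (by positivity), ← sqrt_sq he.le,
    ← sqrt_mul (by positivity)]
  refine le_sqrt_of_sq_le ?_
  calc (N : ℝ) ^ 2 = N * N := sq _
    _ ≤ C₁ * ((N - 2 * d : ℕ) + 1) * e * (2 * C₂ * (d + 1) * e) := by gcongr
    _ = _ := by ring

theorem exists_levelWeight_le (J h : ℝ) {m c : ℝ} (hm : m ∈ Set.Ioo 0 1) (hc : 0 < c) :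
    ∃ C : ℝ, 0 ≤ C ∧ ∀ N d : ℕ, N ≠ 0 → 2 * d ≤ N →
      ptilde J h (density N d) ≤ ptilde J h m - c * (density N d - m) ^ 2 →
      levelWeight N J h d ≤
        C * peakWeight N J h m * exp (-(c / 2) * (N * (density N d - m) ^ 2)) := by
  obtain ⟨C, hC, hpre⟩ := exists_le_sqrt_mul_sqrt_mul_exp hm (half_pos hc)
  refine ⟨C, hC, fun N d hN hd hdecay => (levelWeight_le_levelApprox J h hN hd).trans ?_⟩
  have hN' : (0 : ℝ) < N := by exact_mod_cast hN.bot_lt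
  have hnorm := levelNorm_pos N
  have hrate := (rateFun_le_ptilde J h (density_mem_Icc hd)).trans hdecay
  have hpre := hpre N d hN hd
  set x := density N d
  set r := √((N - 2 * d : ℕ) + 1) * √((d : ℝ) + 1)
  have hr : 0 < r := by positivity
  calc levelApprox N J h d
      ≤ levelNorm N * exp (N * (ptilde J h m - c * (x - m) ^ 2)) / r := by
        rw [levelApprox]
        gcongr
    _ = levelNorm N * exp (N * ptilde J h m) / N * exp (-(c / 2) * (N * (x - m) ^ 2)) *
          (N / r * exp (-(c / 2 * (N * (x - m) ^ 2)))) := by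
        rw [show N * (ptilde J h m - c * (x - m) ^ 2) = N * ptilde J h m +
          -(c / 2) * (N * (x - m) ^ 2) + -(c / 2 * (N * (x - m) ^ 2)) by ring, exp_add, exp_add]
        field_simp
    _ ≤ levelNorm N * exp (N * ptilde J h m) / N * exp (-(c / 2) * (N * (x - m) ^ 2)) * C := by
        gcongr
        rw [exp_neg, ← div_eq_mul_inv, div_div, div_le_iff₀ (by positivity), ← mul_assoc]
        exact hpre
    _ = C * peakWeight N J h m * exp (-(c / 2) * (N * (x - m) ^ 2)) := by
        rw [peakWeight]
        ring

theorem exists_peakWeight_le {J h m : ℝ} (hfix : m = gFun (tauFun J h m)) (R : ℝ) :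
    ∃ C : ℝ, 0 < C ∧ ∀ N d : ℕ, N ≠ 0 → 2 * d ≤ N → N * (density N d - m) ^ 2 ≤ R →
      peakWeight N J h m ≤ C * levelWeight N J h d := by
  set Q := 1 / m + 1 / (2 * (1 - m)) - J
  refine ⟨2 * exp (|Q| * R) * exp 1 ^ 2, by positivity, fun N d hN hd hR => ?_⟩
  have hN1 : (1 : ℝ) ≤ N := by exact_mod_cast hN.bot_lt
  have hnorm := levelNorm_pos N
  have hrate := ptilde_sub_le_rateFun hfix (density_mem_Icc hd)
  have happrox := levelApprox_le_levelWeight J h hN hd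
  set x := density N d with hx
  have hexp : N * ptilde J h m ≤ |Q| * R + N * rateFun J h x := by
    have hQ : Q * (N * (x - m) ^ 2) ≤ |Q| * R :=
      (mul_le_mul_of_nonneg_right (le_abs_self Q) (by positivity)).trans
        (mul_le_mul_of_nonneg_left hR (abs_nonneg Q))
    nlinarith
  have hroot : √((N - 2 * d : ℕ) + 1) * √((d : ℝ) + 1) ≤ 2 * N := by
    have hk : ((N - 2 * d : ℕ) : ℝ) + 1 ≤ 2 * N := by
      have : ((N - 2 * d : ℕ) : ℝ) ≤ N := by exact_mod_cast N.sub_le _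
      linarith
    have hd' : (d : ℝ) + 1 ≤ 2 * N := by
      have : (2 * d : ℝ) ≤ N := by exact_mod_cast hd
      linarith
    calc _ ≤ √(2 * N) * √(2 * N) := by gcongr
      _ = 2 * N := mul_self_sqrt (by positivity)
  calc peakWeight N J h m
      ≤ levelNorm N * exp (|Q| * R + N * rateFun J h x) / N := by
        rw [peakWeight]
        gcongr
    _ = 2 * exp (|Q| * R) * (levelNorm N * exp (N * rateFun J h x) / (2 * N)) := by
        rw [exp_add]
        field_simp
    _ ≤ 2 * exp (|Q| * R) * levelApprox N J h d := by
        rw [levelApprox, ← hx]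
        gcongr
    _ ≤ 2 * exp (|Q| * R) * exp 1 ^ 2 * levelWeight N J h d := by
        rw [mul_assoc (2 * exp (|Q| * R))]
        gcongr

/-! ### The second moment -/

theorem eventually_forall_mem_dimerLevels {m : ℝ} (hm : 0 < m) {S : Set ℝ} (hS : S ∈ 𝓝 m) :
    ∀ᶠ N : ℕ in Filter.atTop, ∀ d : ℕ, |d - N * (1 - m) / 2| ≤ √N → d ∈ dimerLevels N S := by
  obtain ⟨ε, hε, hball⟩ := Metric.mem_nhds_iff.mp (Filter.inter_mem hS (Ioi_mem_nhds hm))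
  have hsqrt : Filter.Tendsto (fun N : ℕ => √(N : ℝ)) Filter.atTop Filter.atTop :=
    tendsto_sqrt_atTop.comp tendsto_natCast_atTop_atTop
  filter_upwards [hsqrt.eventually_gt_atTop (2 / ε), Filter.eventually_gt_atTop 0]
    with N hN hN0 d hd
  have hN' : (0 : ℝ) < N := by exact_mod_cast hN0
  have hdist : |density N d - m| < ε := calc
    |density N d - m| = 2 / N * |d - N * (1 - m) / 2| := by
      rw [← abs_of_pos (by positivity : (0 : ℝ) < 2 / N), ← abs_mul, ← abs_neg, density]
      congr 1
      field_simp
      ring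
    _ ≤ 2 / N * √N := by gcongr
    _ = 2 / √N := by rw [div_mul_eq_mul_div, mul_div_assoc, sqrt_div_self', mul_one_div]
    _ < ε := (div_lt_comm₀ hε (by positivity)).mp hN
  obtain ⟨hdS, hpos⟩ := hball hdist
  have hle : (2 * d : ℝ) ≤ N := (sub_pos.mp ((div_pos_iff_of_pos_right hN').mp hpos)).le
  exact mem_dimerLevels.mpr ⟨by exact_mod_cast hle, hdS⟩

theorem exists_sum_levelWeight_mul_sq_le {J h m c : ℝ} (hm : m ∈ Set.Ioo 0 1) (hc : 0 < c)
    {S : Set ℝ}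
    (hdecay : ∀ x ∈ S ∩ Set.Icc 0 1, ptilde J h x ≤ ptilde J h m - c * (x - m) ^ 2) :
    ∃ C : ℝ, 0 ≤ C ∧ ∀ N : ℕ, N ≠ 0 →
      ∑ d ∈ dimerLevels N S, levelWeight N J h d * ((d - N * (1 - m) / 2) / √N) ^ 2 ≤
        C * (peakWeight N J h m * √N) := by
  obtain ⟨C, hC, hweight⟩ := exists_levelWeight_le J h hm hc
  refine ⟨4 / (2 * c) * exp (2 * c) * (1 + 2 / (2 * c)) * C, by positivity, fun N hN => ?_⟩
  have hgauss (d : ℕ) (hd : d ∈ dimerLevels N S) : levelWeight N J h d ≤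
      C * peakWeight N J h m * exp (-(2 * c) * ((d - N * (1 - m) / 2) / √N) ^ 2) := by
    obtain ⟨hdN, hdS⟩ := mem_dimerLevels.mp hd
    have hle := hweight N d hN hdN (hdecay _ ⟨hdS, density_mem_Icc hdN⟩)
    rw [mul_sq_density_sub hN] at hle
    convert hle using 3
    ring
  have hs : 1 ≤ √(N : ℝ) := one_le_sqrt.mpr (by exact_mod_cast hN.bot_lt)
  rw [mul_assoc _ C, ← mul_assoc C]
  exact sum_mul_sq_le_of_le_exp_neg (by positivity) hs
    (mul_nonneg hC (peakWeight_nonneg N J h m)) hgauss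

theorem exists_eventually_le_sum_levelWeight {J h m : ℝ} (hfix : m = gFun (tauFun J h m))
    {S : Set ℝ} (hS : S ∈ 𝓝 m) :
    ∃ C : ℝ, 0 < C ∧ ∀ᶠ N : ℕ in Filter.atTop,
      peakWeight N J h m * √N ≤ C * ∑ d ∈ dimerLevels N S, levelWeight N J h d := by
  have hm' : 0 < 1 - m := sub_pos.mpr (hfix ▸ gFun_lt_one _)
  obtain ⟨C, hC, hweight⟩ := exists_peakWeight_le hfix 4
  refine ⟨2 * C, by positivity, ?_⟩
  filter_upwards [eventually_forall_mem_dimerLevels (hfix ▸ gFun_pos _) hS,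
    Filter.eventually_ne_atTop 0] with N hlevels hN
  have hs : 1 ≤ √(N : ℝ) := one_le_sqrt.mpr (by exact_mod_cast hN.bot_lt)
  have hnear (d : ℕ) (hd : |d - N * (1 - m) / 2| ≤ √N) :
      d ∈ dimerLevels N S ∧ peakWeight N J h m / C ≤ levelWeight N J h d := by
    refine ⟨hlevels d hd, (div_le_iff₀' hC).mpr
      (hweight N d hN (mem_dimerLevels.mp (hlevels d hd)).1 ?_)⟩
    have hsq : ((d - N * (1 - m) / 2) / √N) ^ 2 ≤ 1 := by
      rwa [sq_le_one_iff_abs_le_one, abs_div, abs_of_pos (by positivity : 0 < √(N : ℝ)),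
        div_le_one (by positivity)]
    rw [mul_sq_density_sub hN]
    linarith
  have hsum := mul_half_le_sum (by positivity) hs
    (div_nonneg (peakWeight_nonneg N J h m) hC.le) (fun d _ => (levelWeight_pos N J h d).le) hnear
  calc peakWeight N J h m * √N = 2 * C * (peakWeight N J h m / C * (√N / 2)) := by field_simp
    _ ≤ 2 * C * ∑ d ∈ dimerLevels N S, levelWeight N J h d := by gcongr

theorem EL_sq_eq (N : ℕ) (J h m : ℝ) (S : Set ℝ) :
    EL N J h (fun σ => mConf σ ∈ S) (fun σ => ((Msum σ - N * m) / √N) ^ 2) =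
      4 * (∑ d ∈ dimerLevels N S, levelWeight N J h d * ((d - N * (1 - m) / 2) / √N) ^ 2) /
        ∑ d ∈ dimerLevels N S, levelWeight N J h d := by
  rw [EL_mConf_mem N J h S fun k => ((k - N * m) / √N) ^ 2, mul_sum]
  congr 1
  refine sum_congr rfl fun d hd => ?_
  rw [Nat.cast_sub (mem_dimerLevels.mp hd).1]
  push_cast
  ring

theorem exists_ptilde_le_sub_mul_sq {J h m : ℝ} (hm : m ∈ Set.Ioo 0 1)
    (hc : iteratedDeriv 2 (ptilde J h) m < 0) {S : Set ℝ} (hS : S ∈ 𝓝 m)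
    (hlt : ∀ x ∈ closure S ∩ Set.Icc 0 1, x ≠ m → ptilde J h x < ptilde J h m) :
    ∃ c > 0, ∀ x ∈ S ∩ Set.Icc 0 1, ptilde J h x ≤ ptilde J h m - c * (x - m) ^ 2 := by
  have hmax : IsLocalMax (ptilde J h) m := by
    filter_upwards [hS, Icc_mem_nhds hm.1 hm.2] with x hxS hx
    rcases eq_or_ne x m with rfl | hxm
    · exact le_rfl
    · exact (hlt x ⟨subset_closure hxS, hx⟩ hxm).le
  obtain ⟨c, hc, hdecay⟩ := exists_forall_le_sub_mul_sq (isCompact_Icc.inter_left isClosed_closure)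
    (contDiff_ptilde J h (n := 2)).continuous
    (exists_eventually_le_sub_mul_sq (contDiff_ptilde J h) hmax.deriv_eq_zero hc) hlt
  exact ⟨c, hc, fun x hx => hdecay x ⟨subset_closure hx.1, hx.2⟩⟩

theorem stmt19_general {J h m : ℝ} (hfix : m = gFun (tauFun J h m))
    (hc : iteratedDeriv 2 (ptilde J h) m < 0) {S : Set ℝ} (hS : S ∈ 𝓝 m)
    (hlt : ∀ x ∈ closure S ∩ Set.Icc 0 1, x ≠ m → ptilde J h x < ptilde J h m) :
    ∃ K : ℝ, ∀ N : ℕ, 1 ≤ N →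
      EL N J h (fun σ => mConf σ ∈ S) (fun σ => ((Msum σ - N * m) / √N) ^ 2) ≤ K := by
  have hm : m ∈ Set.Ioo 0 1 := hfix ▸ ⟨gFun_pos _, gFun_lt_one _⟩
  obtain ⟨c, hc, hdecay⟩ := exists_ptilde_le_sub_mul_sq hm hc hS hlt
  obtain ⟨A, hA, hnum⟩ := exists_sum_levelWeight_mul_sq_le hm hc hdecay
  obtain ⟨B, hB, hden⟩ := exists_eventually_le_sum_levelWeight hfix hS
  have hbound : ∀ᶠ N : ℕ in Filter.atTop,
      EL N J h (fun σ => mConf σ ∈ S) (fun σ => ((Msum σ - N * m) / √N) ^ 2) ≤ 4 * A * B := by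
    filter_upwards [hden, Filter.eventually_ne_atTop 0] with N hden hN
    rw [EL_sq_eq]
    refine div_le_of_le_mul₀ (sum_nonneg fun d _ => (levelWeight_pos N J h d).le)
      (by positivity) ?_
    calc _ ≤ 4 * (A * (peakWeight N J h m * √N)) := by gcongr; exact hnum N hN
      _ ≤ 4 * (A * (B * ∑ d ∈ dimerLevels N S, levelWeight N J h d)) := by gcongr
      _ = 4 * A * B * ∑ d ∈ dimerLevels N S, levelWeight N J h d := by ring
  obtain ⟨K, hK⟩ := (Filter.isBoundedUnder_of_eventually_le hbound).bddAbove_range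
  exact ⟨K, fun N _ => hK (Set.mem_range_self N)⟩

/-- Uniform conditional second-moment bound along the critical line:
if `𝑝̃` has exactly two maximizers `m₁ < m₂` (fixed points with `𝑝̃'' < 0`),
`ξ ∈ (m₁, m₂)`, and `ℙ(S_ℓ) → p_ℓ > 0`, then `E_ℓ[W_ℓ²] ≤ K` for all `N ≥ 1`, where
`W_ℓ = (M - N m_ℓ)/√N`. -/
theorem stmt19 (J h : ℝ) (hJ : 0 ≤ J) (m1 m2 : ℝ)
    (hm1 : m1 ∈ Set.Icc (0:ℝ) 1) (hm2 : m2 ∈ Set.Icc (0:ℝ) 1) (h12 : m1 < m2)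
    (hmax1 : ∀ m ∈ Set.Icc (0:ℝ) 1, ptilde J h m ≤ ptilde J h m1)
    (heq : ptilde J h m2 = ptilde J h m1)
    (honly : ∀ m ∈ Set.Icc (0:ℝ) 1,
      (∀ m' ∈ Set.Icc (0:ℝ) 1, ptilde J h m' ≤ ptilde J h m) → m = m1 ∨ m = m2)
    (hfix1 : m1 = gFun (tauFun J h m1)) (hfix2 : m2 = gFun (tauFun J h m2))
    (hc1 : iteratedDeriv 2 (ptilde J h) m1 < 0)
    (hc2 : iteratedDeriv 2 (ptilde J h) m2 < 0)
    (ξ : ℝ) (hξ : ξ ∈ Set.Ioo m1 m2)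
    (p1 p2 : ℝ) (hp1 : 0 < p1) (hp2 : 0 < p2)
    (hconv1 : Filter.Tendsto (fun N : ℕ => probConf N J h (fun σ => mConf σ < ξ))
      Filter.atTop (nhds p1))
    (hconv2 : Filter.Tendsto (fun N : ℕ => probConf N J h (fun σ => ξ < mConf σ))
      Filter.atTop (nhds p2)) :
    (∃ K : ℝ, ∀ N : ℕ, 1 ≤ N →
      EL N J h (fun σ => mConf σ < ξ)
          (fun σ => (((Msum σ : ℝ) - N * m1) / Real.sqrt N)^2) ≤ K) ∧
    (∃ K : ℝ, ∀ N : ℕ, 1 ≤ N →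
      EL N J h (fun σ => ξ < mConf σ)
          (fun σ => (((Msum σ : ℝ) - N * m2) / Real.sqrt N)^2) ≤ K) := by
  have hlt : ∀ x ∈ Set.Icc (0 : ℝ) 1, x ≠ m1 → x ≠ m2 → ptilde J h x < ptilde J h m1 :=
    fun x hx hx1 hx2 => (hmax1 x hx).lt_of_ne fun hxm =>
      (honly x hx fun y hy => hxm ▸ hmax1 y hy).elim hx1 hx2
  refine ⟨stmt19_general hfix1 hc1 (Iio_mem_nhds hξ.1) fun x hx hx1 => ?_,
    stmt19_general hfix2 hc2 (S := Set.Ioi ξ) (Ioi_mem_nhds hξ.2) fun x hx hx2 => ?_⟩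
  · rw [closure_Iio] at hx
    exact hlt x hx.2 hx1 (hx.1.trans_lt hξ.2).ne
  · rw [closure_Ioi] at hx
    exact heq ▸ hlt x hx.2 (hξ.1.trans_le hx.1).ne' hx2
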